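/- arXiv:2309.06718 — 3 statements merged into one kernel-verified Lean document; each statement's English description precedes it below -/
import Mathlib

section
/- Let n ≥ 1 and l ≥ 1 be integers and let γ, c, θ, η, k₁, k₂, ω₀, ω₁ be positive reals such that κ := γ − n/(2c) − θ > 0 and k₂ > 1/(4κ). Set ω := (ω₁² + l·ω₀² + l·ω₀⁴)/(2η) and χ := min{2κ − 1/(2k₂), 2k₁, θ}. Let z, e : [0,∞) → ℝⁿ and r : [0,∞) → ℝ be differentiable, let Δ₁,…,Δₙ : [0,∞) → ℝ^{n×n} be continuous matrix-valued functions, let P, P₁,…,P_l, Q₁,…,Q_l : [0,∞) → ℝ be continuous nonnegative functions, and let G : [0,∞) → ℝⁿ be continuous with ‖G(t)‖ ≤ ω₁·P(t) + ω₀·Σ_{i=1}^{l} P_i(t) + ω₀²·Σ_{i=1}^{l} Q_i(t) for all t ≥ 0. Suppose that for all t ≥ 0: (i) ż(t) = [θ(r(t)−1)/r(t) − (c/2)·Σ_{j=1}^{n} e_j(t)²‖Δ_j(t)‖² − (η/2)(P(t)² + Σ_{i=1}^{l}(P_i(t)² + Q_i(t)²)) − γ]·z(t) + (Σ_{j=1}^{n}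 e_j(t)·Δ_j(t))·z(t) + G(t)/r(t); (ii) ė(t) = r(t)·z(t) − Λ(t)·e(t) where Λ(t) = (k₁ + k₂·r(t)²)·Iₙ + (c·r(t)²/2)·diag(‖Δ₁(t)‖²,…,‖Δₙ(t)‖²); (iii) ṙ(t) = −θ(r(t)−1) + (c·r(t)/2)·Σ_{j=1}^{n} e_j(t)²‖Δ_j(t)‖² with r(0) > 1. Then for all t ≥ 0, r(t) ≥ 1, ‖z(t)‖ ≤ √(‖z(0)‖²·e^{−2κt} + ω/κ), r(t) ≤ √(2W₀·e^{−χt} + (θ+2ω)/χ) with W₀ := (1/2)(‖z(0)‖² + ‖e(0)‖² + r(0)²), and consequently ‖r(t)·z(t)‖ ≤ √(‖z(0)‖²·e^{−2κt} + ω/κ) · √(2W₀·e^{−χt} + (θ+2ω)/χ); in particular the scaled estimation error e_d = r·z is globally uniformly ultimately bounded. -/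
/-- Frobenius norm of a real matrix. -/
noncomputable def frobNorm {n m : ℕ} (B : Matrix (Fin n) (Fin m) ℝ) : ℝ :=
  Real.sqrt (∑ i, ∑ j, (B i j) ^ 2)

/-- Matrix-vector product, with values in Euclidean space. -/
noncomputable def matVec {n m : ℕ} (B : Matrix (Fin n) (Fin m) ℝ)
    (v : EuclideanSpace ℝ (Fin m)) : EuclideanSpace ℝ (Fin n) :=
  WithLp.toLp 2 (fun i => ∑ j, B i j * v j)

lemma aux_gronwall (f f' : ℝ → ℝ) (a b : ℝ) (ha : 0 < a) (hb : 0 ≤ b)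
    (hf : ∀ t ≥ (0:ℝ), HasDerivAt f (f' t) t)
    (hle : ∀ t ≥ (0:ℝ), f' t ≤ -a * f t + b) :
    ∀ t ≥ (0:ℝ), f t ≤ f 0 * Real.exp (-a * t) + b / a := by
  intro t ht
  have hE : ∀ t : ℝ, HasDerivAt (fun t => Real.exp (a * t)) (Real.exp (a * t) * a) t := by
    intro t
    have := ((hasDerivAt_id t).const_mul a).exp
    simpa using this
  have hg : ∀ t ≥ (0:ℝ), HasDerivAt (fun t => (f t - b / a) * Real.exp (a * t))
      (f' t * Real.exp (a * t) + (f t - b / a) * (Real.exp (a * t) * a)) t := by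
    intro t ht
    exact ((hf t ht).sub_const (b / a)).mul (hE t)
  have hanti : AntitoneOn (fun t => (f t - b / a) * Real.exp (a * t)) (Set.Ici (0:ℝ)) := by
    apply antitoneOn_of_deriv_nonpos (convex_Ici 0)
    · intro x hx
      exact (hg x hx).continuousAt.continuousWithinAt
    · intro x hx
      exact (hg x (interior_subset hx)).differentiableAt.differentiableWithinAt
    · intro x hx
      rw [(hg x (interior_subset hx)).deriv]
      have h1 := hle x (interior_subset hx)
      have h2 : f' x * Real.exp (a * x) + (f x - b / a) * (Real.exp (a * x) * a)
          = (f' x + a * f x - b) * Real.exp (a * x) := by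
        field_simp
        ring
      rw [h2]
      exact mul_nonpos_of_nonpos_of_nonneg (by linarith) (Real.exp_pos _).le
  have h := hanti (Set.mem_Ici.2 le_rfl) (Set.mem_Ici.2 ht) ht
  simp only [mul_zero, Real.exp_zero, mul_one] at h
  have hneg : Real.exp (a * t) * Real.exp (-a * t) = 1 := by
    rw [← Real.exp_add]; simp
  have h3 := mul_le_mul_of_nonneg_right h (Real.exp_pos (-a * t)).le
  rw [mul_assoc, hneg] at h3
  have h4 : 0 ≤ b / a * Real.exp (-a * t) := by positivity
  linarith

lemma aux_young (η x a p : ℝ) (hη : 0 < η) :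
    x * (a * p) ≤ η / 2 * p ^ 2 * x ^ 2 + a ^ 2 / (2 * η) := by
  have h : η / 2 * p ^ 2 * x ^ 2 + a ^ 2 / (2 * η) - x * (a * p)
      = (η * (p * x) - a) ^ 2 / (2 * η) := by
    field_simp
    ring
  have h2 : 0 ≤ (η * (p * x) - a) ^ 2 / (2 * η) := by positivity
  linarith

lemma aux_frob {n : ℕ} (B : Matrix (Fin n) (Fin n) ℝ) (v : EuclideanSpace ℝ (Fin n)) :
    ‖matVec B v‖ ≤ frobNorm B * ‖v‖ := by
  have h0 : 0 ≤ frobNorm B * ‖v‖ := mul_nonneg (Real.sqrt_nonneg _) (norm_nonneg _)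
  apply le_of_sq_le_sq _ h0
  rw [mul_pow, frobNorm, Real.sq_sqrt (by positivity), EuclideanSpace.real_norm_sq_eq,
    EuclideanSpace.real_norm_sq_eq, Finset.sum_mul]
  apply Finset.sum_le_sum
  intro i _
  simp only [matVec]
  exact Finset.sum_mul_sq_le_sq_mul_sq _ _ _

lemma aux_matVec_sum {n : ℕ} (a : Fin n → ℝ) (D : Fin n → Matrix (Fin n) (Fin n) ℝ)
    (v : EuclideanSpace ℝ (Fin n)) :
    matVec (∑ j, a j • D j) v = ∑ j, a j • matVec (D j) v := by
  ext i
  simp only [matVec, WithLp.ofLp_sum, Finset.sum_apply, Matrix.sum_apply, Matrix.smul_apply,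
    smul_eq_mul, PiLp.smul_apply, Finset.sum_mul, Finset.mul_sum]
  rw [Finset.sum_comm]
  simp [Finset.mul_sum, mul_assoc]

lemma aux_cross {n : ℕ} (c : ℝ) (hc : 0 < c) (a : Fin n → ℝ)
    (D : Fin n → Matrix (Fin n) (Fin n) ℝ) (v : EuclideanSpace ℝ (Fin n)) :
    inner ℝ v (matVec (∑ j, a j • D j) v) ≤
      (c / 2 * ∑ j, (a j) ^ 2 * (frobNorm (D j)) ^ 2 + (n : ℝ) / (2 * c)) * ‖v‖ ^ 2 := by
  rw [aux_matVec_sum, inner_sum]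
  have h : ∀ j ∈ Finset.univ, inner ℝ v (a j • matVec (D j) v) ≤
      (c / 2 * ((a j) ^ 2 * (frobNorm (D j)) ^ 2) + 1 / (2 * c)) * ‖v‖ ^ 2 := by
    intro j _
    have h1 : inner ℝ v (a j • matVec (D j) v) ≤ ‖v‖ * (|a j| * (frobNorm (D j) * ‖v‖)) := by
      refine (real_inner_le_norm _ _).trans ?_
      rw [norm_smul, Real.norm_eq_abs]
      have := aux_frob (D j) v
      gcongr
    have h2 := aux_young c 1 1 (|a j| * frobNorm (D j)) hc
    have h3 := mul_le_mul_of_nonneg_right h2 (sq_nonneg ‖v‖)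
    rw [mul_pow, sq_abs] at h3
    calc _ ≤ _ := h1
      _ = 1 * (1 * (|a j| * frobNorm (D j))) * ‖v‖ ^ 2 := by ring
      _ ≤ _ := h3
      _ = _ := by ring
  refine (Finset.sum_le_sum h).trans (le_of_eq ?_)
  rw [← Finset.sum_mul, Finset.sum_add_distrib, ← Finset.mul_sum]
  simp
  left
  field_simp

lemma aux_G {l : ℕ} (η ω₀ ω₁ x p : ℝ) (hη : 0 < η) (P' Q : Fin l → ℝ) :
    x * (ω₁ * p + ω₀ * ∑ i, P' i + ω₀ ^ 2 * ∑ i, Q i) ≤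
      η / 2 * (p ^ 2 + ∑ i, ((P' i) ^ 2 + (Q i) ^ 2)) * x ^ 2
        + (ω₁ ^ 2 + (l : ℝ) * ω₀ ^ 2 + (l : ℝ) * ω₀ ^ 4) / (2 * η) := by
  have h1 := aux_young η x ω₁ p hη
  have h2 : ∑ i, (x * (ω₀ * P' i) + x * (ω₀ ^ 2 * Q i)) ≤
      ∑ i, ((P' i ^ 2 + Q i ^ 2) * (η / 2 * x ^ 2)
        + (ω₀ ^ 2 / (2 * η) + ω₀ ^ 4 / (2 * η))) := by
    apply Finset.sum_le_sum
    intro i _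
    have h3 := aux_young η x ω₀ (P' i) hη
    have h4 := aux_young η x (ω₀ ^ 2) (Q i) hη
    have : (ω₀ ^ 2) ^ 2 = ω₀ ^ 4 := by ring
    rw [this] at h4
    linarith
  rw [Finset.sum_add_distrib, Finset.sum_add_distrib, ← Finset.sum_mul, ← Finset.mul_sum,
    ← Finset.mul_sum, ← Finset.mul_sum, ← Finset.mul_sum] at h2
  simp only [Finset.sum_const, Finset.card_univ, Fintype.card_fin, nsmul_eq_mul] at h2
  have h5 : (ω₁ ^ 2 + (l : ℝ) * ω₀ ^ 2 + (l : ℝ) * ω₀ ^ 4) / (2 * η)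
      = ω₁ ^ 2 / (2 * η) + l * (ω₀ ^ 2 / (2 * η) + ω₀ ^ 4 / (2 * η)) := by ring
  rw [h5]
  linarith

lemma aux_diag {n : ℕ} (a b : ℝ) (d : Fin n → ℝ) (v : EuclideanSpace ℝ (Fin n)) :
    inner ℝ v (matVec (a • (1 : Matrix (Fin n) (Fin n) ℝ) + b • Matrix.diagonal d) v)
      = a * ‖v‖ ^ 2 + b * ∑ j, (v j) ^ 2 * d j := by
  rw [EuclideanSpace.real_norm_sq_eq, PiLp.inner_apply, Finset.mul_sum, Finset.mul_sum,
    ← Finset.sum_add_distrib]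
  apply Finset.sum_congr rfl
  intro i _
  simp [matVec, Matrix.one_apply, Matrix.diagonal_apply, add_mul, Finset.sum_add_distrib]
  ring

lemma aux_r (r S : ℝ → ℝ) (θ c : ℝ) (hθ : 0 < θ) (hc : 0 < c) (hS : ∀ t, 0 ≤ S t)
    (hr : ∀ t ≥ (0 : ℝ), HasDerivAt r (-θ * (r t - 1) + c * r t / 2 * S t) t)
    (hr0 : 1 < r 0) : ∀ t ≥ (0:ℝ), 1 ≤ r t := by
  intro t ht
  by_contra! hlt
  obtain ⟨m, hm1, hm2⟩ := exists_between (max_lt hlt one_pos)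
  have hm0 : 0 < m := (le_max_right _ _).trans_lt hm1
  have hmr : r t < m := (le_max_left _ _).trans_lt hm1
  have key := image_le_of_deriv_right_lt_deriv_boundary (f := fun s => - r s)
    (f' := fun s => -(-θ * (r s - 1) + c * r s / 2 * S s)) (a := 0) (b := t)
    (B := fun _ => -m) (B' := fun _ => 0)
    (fun s hs => (hr s hs.1).neg.continuousAt.continuousWithinAt)
    (fun s hs => (hr s hs.1).neg.hasDerivWithinAt)
    (by linarith) (fun s => hasDerivAt_const s _)
    (by
      intro s hs heq
      have hrs : r s = m := by simpa using heq
      simp only [hrs]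
      have h1 : 0 ≤ c * m / 2 * S s := mul_nonneg (by positivity) (hS s)
      nlinarith)
  have := key (Set.right_mem_Icc.2 ht)
  linarith

/-- Theorem 1 of the paper, error-dynamics form: the IIDOB disturbance
estimation error `e_d = r·z` is globally uniformly ultimately bounded. -/
theorem stmt2 (n l : ℕ) (hn : 1 ≤ n) (hl : 1 ≤ l)
    (γ c θ η k₁ k₂ ω₀ ω₁ : ℝ)
    (hγ : 0 < γ) (hc : 0 < c) (hθ : 0 < θ) (hη : 0 < η)
    (hk₁ : 0 < k₁) (hk₂ : 0 < k₂) (hω₀ : 0 < ω₀) (hω₁ : 0 < ω₁)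
    (κ ω χ W₀ : ℝ)
    (hκdef : κ = γ - (n : ℝ) / (2 * c) - θ) (hκpos : 0 < κ)
    (hk₂κ : k₂ > 1 / (4 * κ))
    (hωdef : ω = (ω₁ ^ 2 + (l : ℝ) * ω₀ ^ 2 + (l : ℝ) * ω₀ ^ 4) / (2 * η))
    (hχdef : χ = min (2 * κ - 1 / (2 * k₂)) (min (2 * k₁) θ))
    (z e : ℝ → EuclideanSpace ℝ (Fin n)) (r : ℝ → ℝ)
    (Δ : Fin n → ℝ → Matrix (Fin n) (Fin n) ℝ)
    (hΔcont : ∀ j, ContinuousOn (Δ j) (Set.Ici (0 : ℝ)))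
    (P : ℝ → ℝ) (P' Q : Fin l → ℝ → ℝ)
    (hPcont : ContinuousOn P (Set.Ici (0 : ℝ)))
    (hP'cont : ∀ i, ContinuousOn (P' i) (Set.Ici (0 : ℝ)))
    (hQcont : ∀ i, ContinuousOn (Q i) (Set.Ici (0 : ℝ)))
    (hPpos : ∀ t ≥ (0 : ℝ), 0 ≤ P t)
    (hP'pos : ∀ i, ∀ t ≥ (0 : ℝ), 0 ≤ P' i t)
    (hQpos : ∀ i, ∀ t ≥ (0 : ℝ), 0 ≤ Q i t)
    (G : ℝ → EuclideanSpace ℝ (Fin n))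
    (hGcont : ContinuousOn G (Set.Ici (0 : ℝ)))
    (hGbound : ∀ t ≥ (0 : ℝ),
      ‖G t‖ ≤ ω₁ * P t + ω₀ * ∑ i, P' i t + ω₀ ^ 2 * ∑ i, Q i t)
    -- (i) scaled-estimation-error dynamics (17):
    (hz : ∀ t ≥ (0 : ℝ), HasDerivAt z
      ((θ * (r t - 1) / r t
          - c / 2 * ∑ j, (e t j) ^ 2 * (frobNorm (Δ j t)) ^ 2
          - η / 2 * ((P t) ^ 2 + ∑ i, ((P' i t) ^ 2 + (Q i t) ^ 2))
          - γ) • z t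
        + matVec (∑ j, (e t j) • Δ j t) (z t)
        + (r t)⁻¹ • G t) t)
    -- (ii) state-estimation-error dynamics (18):
    (he : ∀ t ≥ (0 : ℝ), HasDerivAt e
      (r t • z t
        - matVec ((k₁ + k₂ * (r t) ^ 2) • (1 : Matrix (Fin n) (Fin n) ℝ)
            + (c * (r t) ^ 2 / 2) •
              Matrix.diagonal (fun j => (frobNorm (Δ j t)) ^ 2)) (e t)) t)
    -- (iii) adaptive scaling law (13f):
    (hr : ∀ t ≥ (0 : ℝ), HasDerivAt r
      (-θ * (r t - 1) + c * r t / 2 * ∑ j, (e t j) ^ 2 * (frobNorm (Δ j t)) ^ 2) t)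
    (hr0 : 1 < r 0)
    (hW₀ : W₀ = (1 / 2) * (‖z 0‖ ^ 2 + ‖e 0‖ ^ 2 + (r 0) ^ 2)) :
    ∀ t ≥ (0 : ℝ),
      1 ≤ r t ∧
      ‖z t‖ ≤ Real.sqrt (‖z 0‖ ^ 2 * Real.exp (-2 * κ * t) + ω / κ) ∧
      r t ≤ Real.sqrt (2 * W₀ * Real.exp (-χ * t) + (θ + 2 * ω) / χ) ∧
      ‖r t • z t‖ ≤ Real.sqrt (‖z 0‖ ^ 2 * Real.exp (-2 * κ * t) + ω / κ) *
        Real.sqrt (2 * W₀ * Real.exp (-χ * t) + (θ + 2 * ω) / χ) := by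
  set S : ℝ → ℝ := fun t => ∑ j, (e t j) ^ 2 * (frobNorm (Δ j t)) ^ 2 with hSdef
  have hS : ∀ t, 0 ≤ S t := fun t => by simp only [hSdef]; positivity
  have hr1 : ∀ t ≥ (0:ℝ), 1 ≤ r t := aux_r r S θ c hθ hc hS hr hr0
  have hω : 0 ≤ ω := by rw [hωdef]; positivity
  have hχ : 0 < χ := by
    rw [hχdef]
    refine lt_min ?_ (lt_min (by linarith) hθ)
    have h1 : 1 < k₂ * (4 * κ) := (div_lt_iff₀ (by positivity)).1 hk₂κ
    rw [sub_pos, div_lt_iff₀ (by positivity)]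
    linarith
  have hzin : ∀ t ≥ (0:ℝ), 2 * inner ℝ (z t) ((θ * (r t - 1) / r t
          - c / 2 * ∑ j, (e t j) ^ 2 * (frobNorm (Δ j t)) ^ 2
          - η / 2 * ((P t) ^ 2 + ∑ i, ((P' i t) ^ 2 + (Q i t) ^ 2))
          - γ) • z t
        + matVec (∑ j, (e t j) • Δ j t) (z t)
        + (r t)⁻¹ • G t) ≤ -(2 * κ) * ‖z t‖ ^ 2 + 2 * ω := by
    intro t ht
    have hr1t := hr1 t ht
    rw [inner_add_right, inner_add_right, inner_smul_right, real_inner_self_eq_norm_sq]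
    have h1 := aux_cross c hc (fun j => e t j) (fun j => Δ j t) (z t)
    have h2 := aux_G η ω₀ ω₁ ‖z t‖ (P t) hη (fun i => P' i t) (fun i => Q i t)
    rw [← hωdef] at h2
    have h3 : inner ℝ (z t) ((r t)⁻¹ • G t) ≤
        ‖z t‖ * (ω₁ * P t + ω₀ * ∑ i, P' i t + ω₀ ^ 2 * ∑ i, Q i t) := by
      refine (real_inner_le_norm _ _).trans ?_
      apply mul_le_mul_of_nonneg_left _ (norm_nonneg _)
      rw [norm_smul, Real.norm_eq_abs, abs_of_nonneg (by positivity)]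
      refine le_trans ?_ (hGbound t ht)
      exact mul_le_of_le_one_left (norm_nonneg _) (inv_le_one_of_one_le₀ hr1t)
    have h4 : θ * (r t - 1) / r t ≤ θ := by
      rw [div_le_iff₀ (by linarith)]
      nlinarith
    have h5 := mul_le_mul_of_nonneg_right h4 (sq_nonneg ‖z t‖)
    have h6 : κ * ‖z t‖ ^ 2 = (γ - (n : ℝ) / (2 * c) - θ) * ‖z t‖ ^ 2 := by rw [hκdef]
    linarith
  have hz2 : ∀ t ≥ (0:ℝ), ‖z t‖ ^ 2 ≤ ‖z 0‖ ^ 2 * Real.exp (-2 * κ * t) + ω / κ := by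
    intro t ht
    have := aux_gronwall (fun t => ‖z t‖ ^ 2) _ (2 * κ) (2 * ω) (by positivity) (by positivity)
      (fun t ht => (hz t ht).norm_sq) hzin t ht
    have h1 : 2 * ω / (2 * κ) = ω / κ := by field_simp
    have h2 : -(2 * κ) * t = -2 * κ * t := by ring
    rwa [h1, h2] at this
  have hW : ∀ t ≥ (0:ℝ), ‖z t‖ ^ 2 + ‖e t‖ ^ 2 + r t ^ 2 ≤
      2 * W₀ * Real.exp (-χ * t) + (θ + 2 * ω) / χ := by
    intro t ht
    have := aux_gronwall (fun t => ‖z t‖ ^ 2 + ‖e t‖ ^ 2 + r t ^ 2) _ χ (θ + 2 * ω) hχ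
      (by positivity)
      (fun t ht => (((hz t ht).norm_sq).add ((he t ht).norm_sq)).add ((hr t ht).pow 2)) ?_ t ht
    · have h1 : 2 * W₀ = ‖z 0‖ ^ 2 + ‖e 0‖ ^ 2 + r 0 ^ 2 := by rw [hW₀]; ring
      rwa [h1]
    · intro t ht
      have h1 := hzin t ht
      have h2 : inner ℝ (e t) (r t • z t
        - matVec ((k₁ + k₂ * (r t) ^ 2) • (1 : Matrix (Fin n) (Fin n) ℝ)
            + (c * (r t) ^ 2 / 2) •
              Matrix.diagonal (fun j => (frobNorm (Δ j t)) ^ 2)) (e t)) ≤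
          ‖z t‖ ^ 2 / (4 * k₂) - k₁ * ‖e t‖ ^ 2 - c * (r t) ^ 2 / 2 * S t := by
        rw [inner_sub_right, aux_diag, inner_smul_right]
        have h3 : r t * inner ℝ (e t) (z t) ≤ r t * (‖e t‖ * ‖z t‖) :=
          mul_le_mul_of_nonneg_left (real_inner_le_norm _ _) (by linarith [hr1 t ht])
        have h4 := aux_young (2 * k₂) (r t) ‖z t‖ ‖e t‖ (by positivity)
        have h5 : 2 * (2 * k₂) = 4 * k₂ := by ring
        rw [h5] at h4
        simp only [hSdef]
        linarith
      have hc1 : χ ≤ 2 * κ - 1 / (2 * k₂) := hχdef ▸ min_le_left _ _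
      have hc2 : χ ≤ 2 * k₁ := hχdef ▸ (min_le_right _ _).trans (min_le_left _ _)
      have hc3 : χ ≤ θ := hχdef ▸ (min_le_right _ _).trans (min_le_right _ _)
      have hd1 := mul_le_mul_of_nonneg_right hc1 (sq_nonneg ‖z t‖)
      have hd2 := mul_le_mul_of_nonneg_right hc2 (sq_nonneg ‖e t‖)
      have hd3 := mul_le_mul_of_nonneg_right hc3 (sq_nonneg (r t))
      have h6 : 2 * (‖z t‖ ^ 2 / (4 * k₂)) = 1 / (2 * k₂) * ‖z t‖ ^ 2 := by
        field_simp
        ring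
      have h7 : 0 ≤ θ * (r t - 1) ^ 2 := by positivity
      simp only [hSdef] at h2
      norm_num
      norm_num at h1 h2
      linarith
  intro t ht
  have hzb : ‖z t‖ ≤ Real.sqrt (‖z 0‖ ^ 2 * Real.exp (-2 * κ * t) + ω / κ) :=
    Real.le_sqrt_of_sq_le (hz2 t ht)
  have hrb : r t ≤ Real.sqrt (2 * W₀ * Real.exp (-χ * t) + (θ + 2 * ω) / χ) := by
    apply Real.le_sqrt_of_sq_le
    have := hW t ht
    nlinarith [sq_nonneg ‖z t‖, sq_nonneg ‖e t‖]
  refine ⟨hr1 t ht, hzb, hrb, ?_⟩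
  rw [norm_smul, Real.norm_eq_abs, abs_of_nonneg (by linarith [hr1 t ht]), mul_comm]
  exact mul_le_mul hzb hrb (by linarith [hr1 t ht]) (Real.sqrt_nonneg _)
end

section
/- Let κ, ω, T₁, T₂ be positive reals with T₂ > 1/(4κ), and set ζ := min{2T₁, 2κ − 1/(2T₂)}. Let z, e_f : [0,∞) → ℝⁿ be differentiable with e_f(0) = 0, let r : [0,∞) → ℝ be continuous, and let B : [0,∞) → ℝ^{n×n} be a continuous matrix-valued function. Suppose that for all t ≥ 0: (i) ė_f(t) = −(T₁ + T₂·r(t)²·‖B(t)‖²)·e_f(t) + r(t)·B(t)·z(t), and (ii) the function t ↦ (1/2)‖z(t)‖² is differentiable with derivative at most −κ‖z(t)‖² + ω. Then for all t ≥ 0, ‖e_f(t)‖ ≤ √((‖z(0)‖² − 2ω/ζ)·e^{−ζt} + 2ω/ζ). -/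
theorem matVec_norm_le {n m : ℕ} (B : Matrix (Fin n) (Fin m) ℝ)
    (v : EuclideanSpace ℝ (Fin m)) : ‖matVec B v‖ ≤ frobNorm B * ‖v‖ := by
  rw [EuclideanSpace.norm_eq, EuclideanSpace.norm_eq, frobNorm,
    ← Real.sqrt_mul (by positivity)]
  apply Real.sqrt_le_sqrt
  rw [Finset.sum_mul]
  apply Finset.sum_le_sum
  intro i _
  simp only [Real.norm_eq_abs, sq_abs, matVec]
  exact Finset.sum_mul_sq_le_sq_mul_sq _ _ _

/-- Lemma 1 of the paper, error-dynamics form: bound on the filtering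
error of the modified low-pass filter (29). -/
theorem stmt3 (n : ℕ) (κ ω T₁ T₂ : ℝ)
    (hκ : 0 < κ) (hω : 0 < ω) (hT₁ : 0 < T₁) (hT₂ : 0 < T₂)
    (hT₂κ : T₂ > 1 / (4 * κ))
    (ζ : ℝ) (hζ : ζ = min (2 * T₁) (2 * κ - 1 / (2 * T₂)))
    (z ef : ℝ → EuclideanSpace ℝ (Fin n))
    (hef0 : ef 0 = 0)
    (r : ℝ → ℝ) (hr : ContinuousOn r (Set.Ici (0 : ℝ)))
    (B : ℝ → Matrix (Fin n) (Fin n) ℝ) (hB : ContinuousOn B (Set.Ici (0 : ℝ)))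
    -- (i) filtering-error dynamics:
    (hef : ∀ t ≥ (0 : ℝ), HasDerivAt ef
      ((-(T₁ + T₂ * (r t) ^ 2 * (frobNorm (B t)) ^ 2)) • ef t
        + r t • matVec (B t) (z t)) t)
    -- (ii) Lyapunov decay of the scaled estimation error:
    (V' : ℝ → ℝ)
    (hzdiff : ∀ t ≥ (0 : ℝ), HasDerivAt (fun s => (1 / 2) * ‖z s‖ ^ 2) (V' t) t)
    (hV' : ∀ t ≥ (0 : ℝ), V' t ≤ -κ * ‖z t‖ ^ 2 + ω) :
    ∀ t ≥ (0 : ℝ),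
      ‖ef t‖ ≤ Real.sqrt ((‖z 0‖ ^ 2 - 2 * ω / ζ) * Real.exp (-ζ * t) + 2 * ω / ζ) := by
  have hζ1 : ζ ≤ 2 * T₁ := hζ ▸ min_le_left _ _
  have hζ2 : ζ ≤ 2 * κ - 1 / (2 * T₂) := hζ ▸ min_le_right _ _
  have hζ0 : 0 < ζ := by
    rw [hζ]
    apply lt_min (by linarith)
    have h1 : 1 < T₂ * (4 * κ) := (div_lt_iff₀ (by positivity)).1 hT₂κ
    have h2 : 1 / (2 * T₂) < 2 * κ := by
      rw [div_lt_iff₀ (by positivity)]; linarith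
    linarith
  have hder : ∀ t ≥ (0 : ℝ), ∃ g', HasDerivAt
      (fun s => (‖ef s‖ ^ 2 + 2 * ((1 / 2) * ‖z s‖ ^ 2) - 2 * ω / ζ) * Real.exp (ζ * s)) g' t
        ∧ g' ≤ 0 := by
    intro t ht
    have hE : HasDerivAt (fun s => Real.exp (ζ * s)) (Real.exp (ζ * t) * (ζ * 1)) t :=
      ((hasDerivAt_id t).const_mul ζ).exp
    refine ⟨_, ((((hef t ht).norm_sq).add ((hzdiff t ht).const_mul 2)).sub_const
      (2 * ω / ζ)).mul hE, ?_⟩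
    simp only [Pi.add_apply]
    rw [inner_add_right, real_inner_smul_right, real_inner_smul_right, real_inner_self_eq_norm_sq]
    have hv := hV' t ht
    set b := frobNorm (B t)
    set p := inner ℝ (ef t) (matVec (B t) (z t)) with hp
    set E := ‖ef t‖
    set Z := ‖z t‖
    have hb0 : 0 ≤ b := Real.sqrt_nonneg _
    have hpb : |p| ≤ E * (b * Z) := (abs_real_inner_le_norm _ _).trans
      (mul_le_mul_of_nonneg_left (matVec_norm_le _ _) (norm_nonneg _))
    have hrp : r t * p ≤ |r t| * (E * (b * Z)) := by
      calc r t * p ≤ |r t * p| := le_abs_self _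
        _ = |r t| * |p| := abs_mul _ _
        _ ≤ _ := mul_le_mul_of_nonneg_left hpb (abs_nonneg _)
    have hyoung : 2 * (|r t| * (E * (b * Z))) ≤
        2 * T₂ * r t ^ 2 * b ^ 2 * E ^ 2 + 1 / (2 * T₂) * Z ^ 2 := by
      have h : 2 * T₂ * r t ^ 2 * b ^ 2 * E ^ 2 + 1 / (2 * T₂) * Z ^ 2
          - 2 * (|r t| * (E * (b * Z))) = 1 / (2 * T₂) * (2 * T₂ * |r t| * b * E - Z) ^ 2 := by
        rw [← sq_abs (r t)]
        field_simp
        ring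
      have : 0 ≤ 1 / (2 * T₂) * (2 * T₂ * |r t| * b * E - Z) ^ 2 := by positivity
      linarith
    have hEE : ζ * E ^ 2 ≤ 2 * T₁ * E ^ 2 := mul_le_mul_of_nonneg_right hζ1 (sq_nonneg _)
    have hZZ : ζ * Z ^ 2 ≤ (2 * κ - 1 / (2 * T₂)) * Z ^ 2 :=
      mul_le_mul_of_nonneg_right hζ2 (sq_nonneg _)
    have hωζ : 2 * ω / ζ * ζ = 2 * ω := by field_simp
    have key : 2 * (-(T₁ + T₂ * r t ^ 2 * b ^ 2) * E ^ 2 + r t * p) + 2 * V' t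
        + (E ^ 2 + 2 * (1 / 2 * Z ^ 2) - 2 * ω / ζ) * ζ ≤ 0 := by
      linarith
    have := mul_nonpos_of_nonpos_of_nonneg key (Real.exp_pos (ζ * t)).le
    linarith
  choose! g' hg' hg0 using hder
  have hanti := antitoneOn_of_deriv_nonpos (convex_Ici (0 : ℝ))
    (fun t ht => (hg' t ht).continuousAt.continuousWithinAt)
    (fun t ht => by
      rw [interior_Ici] at ht
      exact (hg' t (le_of_lt ht)).differentiableAt.differentiableWithinAt)
    (fun t ht => by
      rw [interior_Ici] at ht
      rw [(hg' t (le_of_lt ht)).deriv]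
      exact hg0 t (le_of_lt ht))
  intro t ht
  have h := hanti (Set.mem_Ici.2 le_rfl) (Set.mem_Ici.2 ht) ht
  simp only [hef0, norm_zero, mul_zero, Real.exp_zero, mul_one] at h
  apply Real.le_sqrt_of_sq_le
  have hexp : Real.exp (ζ * t) * Real.exp (-ζ * t) = 1 := by
    rw [← Real.exp_add]; simp
  have h2 := mul_le_mul_of_nonneg_right h (Real.exp_pos (-ζ * t)).le
  rw [mul_assoc, hexp] at h2
  have hz := sq_nonneg ‖z t‖
  ring_nf at h2 ⊢
  linarith
end

section
/- Let n, m be positive integers, let α₁, α₂, ω > 0 and κ > 1 be reals, and set ϑ := min{2α₁, 2κ − 2, 2α₂}. Let e_x, z : [0,∞) → ℝⁿ and e_u : [0,∞) → ℝᵐ be differentiable, let r : [0,∞) → ℝ be continuous, and let g : [0,∞) → ℝ^{n×m} and G₂ : [0,∞) → ℝ^{m×n} be continuous matrix-valued functions. Suppose that for all t ≥ 0: (i) ė_x(t) = −(α₁ + r(t)²/2)·e_x(t) − r(t)·z(t) + g(t)·e_u(t); (ii) ė_u(t) = −(α₂ + ‖G₂(t)‖²/2)·e_u(t) − g(t)ᵀ·e_x(t)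 + G₂(t)·z(t); (iii) the function t ↦ (1/2)‖z(t)‖² is differentiable with derivative at most −κ‖z(t)‖² + ω. Then for all t ≥ 0, ‖e_x(t)‖ ≤ √(2V₂(0)·e^{−ϑt} + 2ω/ϑ), where V₂(0) := (1/2)(‖e_x(0)‖² + ‖z(0)‖² + ‖e_u(0)‖²); in particular the tracking error e_x is globally uniformly ultimately bounded. -/
theorem inner_matVec_transpose {n m : ℕ} (B : Matrix (Fin n) (Fin m) ℝ)
    (x : EuclideanSpace ℝ (Fin n)) (u : EuclideanSpace ℝ (Fin m)) :
    inner ℝ u (matVec B.transpose x) = inner ℝ x (matVec B u) := by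
  simp only [PiLp.inner_apply, matVec, Matrix.transpose_apply, RCLike.inner_apply, conj_trivial,
    Finset.sum_mul]
  rw [Finset.sum_comm]
  exact Finset.sum_congr rfl fun i _ => Finset.sum_congr rfl fun j _ => by ring

/-- Proposition 1 of the paper, error-dynamics form: the tracking error
`e_x` of the IIDOB-based tracking controller is globally uniformly ultimately bounded. -/
theorem stmt4 (n m : ℕ) (hn : 0 < n) (hm : 0 < m)
    (α₁ α₂ ω κ : ℝ) (hα₁ : 0 < α₁) (hα₂ : 0 < α₂) (hω : 0 < ω) (hκ : 1 < κ)
    (ϑ : ℝ) (hϑ : ϑ = min (2 * α₁) (min (2 * κ - 2) (2 * α₂)))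
    (ex z : ℝ → EuclideanSpace ℝ (Fin n)) (eu : ℝ → EuclideanSpace ℝ (Fin m))
    (r : ℝ → ℝ) (hr : ContinuousOn r (Set.Ici (0 : ℝ)))
    (g : ℝ → Matrix (Fin n) (Fin m) ℝ) (hg : ContinuousOn g (Set.Ici (0 : ℝ)))
    (G₂ : ℝ → Matrix (Fin m) (Fin n) ℝ) (hG₂ : ContinuousOn G₂ (Set.Ici (0 : ℝ)))
    -- (i) tracking-error dynamics:
    (hex : ∀ t ≥ (0 : ℝ), HasDerivAt ex
      ((-(α₁ + (r t) ^ 2 / 2)) • ex t - r t • z t + matVec (g t) (eu t)) t)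
    -- (ii) input-error dynamics:
    (heu : ∀ t ≥ (0 : ℝ), HasDerivAt eu
      ((-(α₂ + (frobNorm (G₂ t)) ^ 2 / 2)) • eu t - matVec (g t).transpose (ex t)
        + matVec (G₂ t) (z t)) t)
    -- (iii) Lyapunov decay of the scaled estimation error:
    (V' : ℝ → ℝ)
    (hzdiff : ∀ t ≥ (0 : ℝ), HasDerivAt (fun s => (1 / 2) * ‖z s‖ ^ 2) (V' t) t)
    (hV' : ∀ t ≥ (0 : ℝ), V' t ≤ -κ * ‖z t‖ ^ 2 + ω)
    (V₂0 : ℝ) (hV₂0 : V₂0 = (1 / 2) * (‖ex 0‖ ^ 2 + ‖z 0‖ ^ 2 + ‖eu 0‖ ^ 2)) :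
    ∀ t ≥ (0 : ℝ),
      ‖ex t‖ ≤ Real.sqrt (2 * V₂0 * Real.exp (-ϑ * t) + 2 * ω / ϑ) := by
  have hpos : 0 < ϑ := by
    rw [hϑ]; exact lt_min (by linarith) (lt_min (by linarith) (by linarith))
  have h1 : ϑ ≤ 2 * α₁ := hϑ ▸ min_le_left _ _
  have h2 : ϑ ≤ 2 * κ - 2 := hϑ ▸ (min_le_right _ _).trans (min_le_left _ _)
  have h3 : ϑ ≤ 2 * α₂ := hϑ ▸ (min_le_right _ _).trans (min_le_right _ _)
  let V : ℝ → ℝ := fun s => (1 / 2) * ‖ex s‖ ^ 2 + (1 / 2) * ‖z s‖ ^ 2 + (1 / 2) * ‖eu s‖ ^ 2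
  have hV : ∀ t ≥ (0 : ℝ), ∃ d, HasDerivAt V d t ∧ d ≤ -ϑ * V t + ω := by
    intro t ht
    refine ⟨_, (((hex t ht).norm_sq.const_mul (1 / 2)).add (hzdiff t ht)).add
      ((heu t ht).norm_sq.const_mul (1 / 2)), ?_⟩
    have hz := hV' t ht
    simp only [inner_add_right, inner_sub_right, real_inner_smul_right,
      inner_matVec_transpose, real_inner_self_eq_norm_sq]
    have a1 : -(r t * inner ℝ (ex t) (z t)) ≤ r t ^ 2 / 2 * ‖ex t‖ ^ 2 + ‖z t‖ ^ 2 / 2 := by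
      have := sq_nonneg ‖r t • ex t + z t‖
      rw [norm_add_sq_real, norm_smul, mul_pow, Real.norm_eq_abs, sq_abs,
        real_inner_smul_left] at this
      linarith
    have a2 : inner ℝ (eu t) (matVec (G₂ t) (z t)) ≤
        frobNorm (G₂ t) ^ 2 / 2 * ‖eu t‖ ^ 2 + ‖z t‖ ^ 2 / 2 := by
      have b1 := real_inner_le_norm (eu t) (matVec (G₂ t) (z t))
      have b2 := mul_le_mul_of_nonneg_left (matVec_norm_le (G₂ t) (z t)) (norm_nonneg (eu t))
      nlinarith [sq_nonneg (frobNorm (G₂ t) * ‖eu t‖ - ‖z t‖)]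
    have c1 := mul_le_mul_of_nonneg_right h1 (sq_nonneg ‖ex t‖)
    have c2 := mul_le_mul_of_nonneg_right h2 (sq_nonneg ‖z t‖)
    have c3 := mul_le_mul_of_nonneg_right h3 (sq_nonneg ‖eu t‖)
    simp only [V]
    nlinarith
  choose! d hd hdle using hV
  let W : ℝ → ℝ := fun s => (V s - ω / ϑ) * Real.exp (ϑ * s)
  have hW : ∀ t ≥ (0 : ℝ), HasDerivAt W
      (d t * Real.exp (ϑ * t) + (V t - ω / ϑ) * (Real.exp (ϑ * t) * (ϑ * 1))) t := fun t ht =>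
    ((hd t ht).sub_const _).mul (((hasDerivAt_id t).const_mul ϑ).exp)
  have hanti : AntitoneOn W (Set.Ici 0) := by
    refine antitoneOn_of_deriv_nonpos (convex_Ici 0)
      (fun t ht => (hW t ht).continuousAt.continuousWithinAt)
      (fun t ht => (hW t (interior_subset ht)).differentiableAt.differentiableWithinAt) ?_
    intro t ht
    rw [(hW t (interior_subset ht)).deriv]
    have e1 := hdle t (interior_subset ht)
    have e2 : d t * Real.exp (ϑ * t) + (V t - ω / ϑ) * (Real.exp (ϑ * t) * (ϑ * 1))
        = (d t + ϑ * V t - ω) * Real.exp (ϑ * t) := by field_simp; ring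
    rw [e2]
    exact mul_nonpos_of_nonpos_of_nonneg (by linarith) (Real.exp_pos _).le
  intro t ht
  have hWt : (V t - ω / ϑ) * Real.exp (ϑ * t) ≤ V 0 - ω / ϑ := by
    simpa [W] using hanti (Set.mem_Ici.2 le_rfl) (Set.mem_Ici.2 ht) ht
  have hV0 : V 0 = V₂0 := by simp only [V, hV₂0]; ring
  have hq : 0 < ω / ϑ := div_pos hω hpos
  have hE := Real.exp_pos (-ϑ * t)
  have hb : V t - ω / ϑ ≤ V₂0 * Real.exp (-ϑ * t) := by
    have hm := mul_le_mul_of_nonneg_right hWt hE.le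
    rw [mul_assoc, ← Real.exp_add, show ϑ * t + -ϑ * t = 0 by ring, Real.exp_zero, hV0] at hm
    nlinarith [mul_pos hq hE]
  apply Real.le_sqrt_of_sq_le
  have hVt : ‖ex t‖ ^ 2 ≤ 2 * V t := by
    simp only [V]; nlinarith [sq_nonneg ‖z t‖, sq_nonneg ‖eu t‖]
  have : 2 * ω / ϑ = 2 * (ω / ϑ) := by ring
  linarith
end
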